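/- Let f : ℝ² → ℝ be of class C² satisfying (i) D²f(p)(q,q) > 0 for all p, q ∈ ℝ² with q ≠ 0, and (ii) there is a constant λ > 0 with D²f(p)(q,q) ≤ λ · (ln(2+|p|)/(1+|p|)) · |q|² for all p, q ∈ ℝ². Let u ∈ C²(ℝ²) solve div[Df(∇u)] = 0 on ℝ², and suppose there are constants 0 ≤ m < 1, K > 0 with |∂₁u(x)| ≤ K(|∂₂u(x)|^m + 1) for all x ∈ ℝ². Then ∇∂₁u ≡ 0 on ℝ², i.e. ∂₁u is a constant function. -/

import Mathlib

open Real MeasureTheory Metric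
open scoped ENNReal

noncomputable section

/-- `ℝ²` with its Euclidean structure. -/
abbrev E2 : Type := EuclideanSpace ℝ (Fin 2)

/-- The `i`-th standard basis vector of `ℝ²`. -/
def ee (i : Fin 2) : E2 := EuclideanSpace.single i 1

/-- The Hessian bilinear form `D²f(p)(q,q)`. -/
def Hess (f : E2 → ℝ) (p q : E2) : ℝ := iteratedFDeriv ℝ 2 f p ![q, q]

/-- The partial derivative `∂ᵢu(x)`. -/
def pd (u : E2 → ℝ) (i : Fin 2) (x : E2) : ℝ := fderiv ℝ u x (ee i)

/-- The equation `div [Df(∇u)] = 0`, i.e. `∑ i, ∂ᵢ[(∂f/∂pᵢ)(∇u(x))] = 0` on `ℝ²`. -/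
def solves (f u : E2 → ℝ) : Prop :=
  ∀ x : E2, ∑ i : Fin 2, fderiv ℝ (fun y => fderiv ℝ f (gradient u y) (ee i)) x (ee i) = 0


open scoped Topology InnerProductSpace Gradient

section Aux
open Filter

lemma integrable_mul_of_continuous_hasCompactSupport {a b : E2 → ℝ} (ha : Continuous a)
    (hb : Continuous b) (hc : HasCompactSupport b) : Integrable (fun x => a x * b x) :=
  (ha.mul hb).integrable_of_hasCompactSupport hc.mul_left

/-- A `C¹` divergence-free field is orthogonal to gradients of test functions. -/
lemma integral_sum_mul_fderiv_eq_zero {V : Fin 2 → E2 → ℝ} (hV : ∀ i, ContDiff ℝ 1 (V i))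
    (hdiv : ∀ x, ∑ i, fderiv ℝ (V i) x (ee i) = 0) {φ : E2 → ℝ} (hφ : ContDiff ℝ 1 φ)
    (hc : HasCompactSupport φ) :
    ∫ x, ∑ i, V i x * fderiv ℝ φ x (ee i) = 0 := by
  have hVd : ∀ i, Continuous fun x => fderiv ℝ (V i) x (ee i) := fun i =>
    ((hV i).continuous_fderiv one_ne_zero).clm_apply continuous_const
  have hφd : ∀ i, Continuous fun x => fderiv ℝ φ x (ee i) := fun i =>
    (hφ.continuous_fderiv one_ne_zero).clm_apply continuous_const
  have hφc : ∀ i, HasCompactSupport fun x => fderiv ℝ φ x (ee i) := fun i =>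
    hc.fderiv_apply ℝ (ee i)
  have hparts : ∀ i, ∫ x, V i x * fderiv ℝ φ x (ee i)
      = - ∫ x, fderiv ℝ (V i) x (ee i) * φ x := fun i =>
    integral_mul_fderiv_eq_neg_fderiv_mul_of_integrable
      (integrable_mul_of_continuous_hasCompactSupport (hVd i) hφ.continuous hc)
      (integrable_mul_of_continuous_hasCompactSupport (hV i).continuous (hφd i) (hφc i))
      (integrable_mul_of_continuous_hasCompactSupport (hV i).continuous hφ.continuous hc)
      (fun x _ => (hV i).differentiable one_ne_zero x)
      (fun x _ => hφ.differentiable one_ne_zero x)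
  rw [integral_finsetSum _ fun i _ =>
    integrable_mul_of_continuous_hasCompactSupport (hV i).continuous (hφd i) (hφc i)]
  simp_rw [hparts]
  rw [Finset.sum_neg_distrib, ← integral_finsetSum _ fun i _ =>
    integrable_mul_of_continuous_hasCompactSupport (hVd i) hφ.continuous hc]
  simp_rw [← Finset.sum_mul, hdiv]
  simp

/-- Differentiating a divergence-free `C¹` field in a direction preserves, weakly,
the vanishing of the divergence. -/
lemma integral_sum_fderiv_mul_fderiv_eq_zero {V : Fin 2 → E2 → ℝ}
    (hV : ∀ i, ContDiff ℝ 1 (V i)) (hdiv : ∀ x, ∑ i, fderiv ℝ (V i) x (ee i) = 0)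
    (e : E2) {φ : E2 → ℝ} (hφ : ContDiff ℝ 1 φ) (hc : HasCompactSupport φ) :
    ∫ x, ∑ i, fderiv ℝ (V i) x e * fderiv ℝ φ x (ee i) = 0 := by
  have hzero : ∀ t : ℝ, ∫ x, ∑ i, V i (x + t • e) * fderiv ℝ φ x (ee i) = 0 := fun t =>
    integral_sum_mul_fderiv_eq_zero (V := fun i x => V i (x + t • e))
      (fun i => (hV i).comp (contDiff_id.add contDiff_const))
      (fun x => by simpa only [fderiv_comp_add_right] using hdiv (x + t • e)) hφ hc
  have hφd : ∀ i, Continuous fun x => fderiv ℝ φ x (ee i) := fun i =>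
    (hφ.continuous_fderiv one_ne_zero).clm_apply continuous_const
  have hφc : ∀ i, HasCompactSupport fun x => fderiv ℝ φ x (ee i) := fun i =>
    hc.fderiv_apply ℝ (ee i)
  have hVd : ∀ i, Continuous fun x => fderiv ℝ (V i) x e := fun i =>
    ((hV i).continuous_fderiv one_ne_zero).clm_apply continuous_const
  let F' : ℝ → E2 → ℝ := fun t x => ∑ i, fderiv ℝ (V i) (x + t • e) e * fderiv ℝ φ x (ee i)
  have hF'c : Continuous (Function.uncurry F') := by
    refine continuous_finsetSum _ fun i _ => ?_
    exact ((hVd i).comp (continuous_snd.add (continuous_fst.smul continuous_const))).mul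
      ((hφd i).comp continuous_snd)
  obtain ⟨M, hM⟩ := ((isCompact_Icc (a := (-1 : ℝ)) (b := 1)).prod
    hc.isCompact).exists_bound_of_continuousOn hF'c.continuousOn
  have hFcont : ∀ t : ℝ, Continuous fun x => ∑ i, V i (x + t • e) * fderiv ℝ φ x (ee i) :=
    fun t => continuous_finsetSum _ fun i _ =>
      ((hV i).continuous.comp (continuous_id.add continuous_const)).mul (hφd i)
  have hF0 : ∀ t x, x ∉ tsupport φ → F' t x = 0 := fun t x hx => by
    have : fderiv ℝ φ x = 0 := by
      by_contra h
      exact hx (support_fderiv_subset ℝ (f := φ) h)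
    simp [F', this]
  have key := hasDerivAt_integral_of_dominated_loc_of_deriv_le (μ := (volume : Measure E2))
    (F := fun (t : ℝ) x => ∑ i, V i (x + t • e) * fderiv ℝ φ x (ee i)) (F' := F') (x₀ := 0)
    (s := Set.Icc (-1) 1) (bound := (tsupport φ).indicator fun _ => M)
    (Icc_mem_nhds (by norm_num) (by norm_num))
    (Eventually.of_forall fun t => (hFcont t).aestronglyMeasurable)
    (integrable_finsetSum _ fun i _ => integrable_mul_of_continuous_hasCompactSupport
      ((hV i).continuous.comp (continuous_id.add continuous_const)) (hφd i) (hφc i))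
    (hF'c.comp (continuous_const.prodMk continuous_id)).aestronglyMeasurable
    (Eventually.of_forall fun x t ht => by
      by_cases hx : x ∈ tsupport φ
      · simpa [hx] using hM (t, x) ⟨ht, hx⟩
      · simp [hx, hF0 t x hx])
    ((integrable_indicator_iff (isClosed_tsupport φ).measurableSet).2
      (integrableOn_const hc.isCompact.measure_lt_top.ne))
    (Eventually.of_forall fun x t _ => by
      refine HasDerivAt.fun_sum fun i _ => HasDerivAt.mul_const ?_ _
      have h1 : HasDerivAt (fun t : ℝ => x + t • e) e t := by
        simpa using ((hasDerivAt_id t).smul_const e).const_add x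
      exact ((hV i).differentiable one_ne_zero _).hasFDerivAt.comp_hasDerivAt t h1)
  have h := key.2
  simp_rw [hzero] at h
  simpa [F'] using h.unique (hasDerivAt_const 0 0)

/-- Cutoff functions on `ℝ²` with Dirichlet integral bounded independently of the scale. -/
lemma exists_cutoff : ∃ D : ℝ, ∀ R : ℝ, 0 < R → ∃ η : E2 → ℝ, ContDiff ℝ 1 η ∧
    HasCompactSupport η ∧ (∀ x, 0 ≤ η x) ∧ (∀ x, η x ≤ 1) ∧ (∀ x ∈ ball 0 R, η x = 1) ∧
    (∀ x ∉ ball 0 (2 * R), η x = 0) ∧ ∫ x, ‖∇ η x‖ ^ 2 ≤ D := by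
  let ψ : ContDiffBump (0 : E2) := ⟨1, 2, one_pos, one_lt_two⟩
  refine ⟨∫ x, ‖∇ ψ x‖ ^ 2, fun R hR => ⟨fun x => ψ (R⁻¹ • x), ?_, ?_, fun x => ψ.nonneg,
    fun x => ψ.le_one, fun x hx => ?_, fun x hx => ?_, ?_⟩⟩
  · exact ψ.contDiff.comp (contDiff_const_smul _)
  · exact ψ.hasCompactSupport.comp_smul (inv_ne_zero hR.ne')
  · refine ψ.one_of_mem_closedBall ?_
    rw [mem_ball_zero_iff] at hx
    rw [mem_closedBall_zero_iff, norm_smul, norm_inv, Real.norm_of_nonneg hR.le]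
    change _ ≤ (1 : ℝ)
    rw [inv_mul_le_iff₀ hR]
    linarith
  · refine ψ.zero_of_le_dist ?_
    rw [mem_ball_zero_iff, not_lt] at hx
    rw [dist_zero_right, norm_smul, norm_inv, Real.norm_of_nonneg hR.le]
    change (2 : ℝ) ≤ _
    rw [le_inv_mul_iff₀ hR]
    linarith
  · have hgrad : ∀ x : E2, ‖∇ (fun x => ψ (R⁻¹ • x)) x‖ ^ 2
        = (R⁻¹) ^ 2 * ‖∇ ψ (R⁻¹ • x)‖ ^ 2 := fun x => by
      simp only [gradient, LinearIsometryEquiv.norm_map]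
      rw [fderiv_comp_smul, norm_smul, mul_pow, norm_inv, Real.norm_of_nonneg hR.le]
    simp_rw [hgrad]
    rw [integral_const_mul,
      Measure.integral_comp_smul volume (fun x => ‖∇ ψ x‖ ^ 2) R⁻¹]
    simp only [finrank_euclideanSpace_fin, smul_eq_mul]
    rw [abs_of_nonneg (by positivity), ← mul_assoc, mul_inv_cancel₀ (by positivity), one_mul]

end Aux

section Energy
open Filter

/-- Weighted Young inequality for a nonnegative symmetric bilinear form. -/
lemma neg_two_mul_bilin_le {B : E2 →L[ℝ] E2 →L[ℝ] ℝ} (hsymm : ∀ p q, B p q = B q p)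
    (hnonneg : ∀ q, 0 ≤ B q q) {a s t : ℝ} (ha : 0 < a) (ht : 0 < t) (p q : E2) :
    -(2 * s * B p q) ≤ t * (a * B p p) + t⁻¹ * (s ^ 2 / a * B q q) := by
  have h := hnonneg ((t * a) • p + s • q)
  simp only [map_add, map_smul, add_apply, smul_apply,
    smul_eq_mul, hsymm q p] at h
  have hta : 0 < t * a := mul_pos ht ha
  have hid : t * (a * B p p) + t⁻¹ * (s ^ 2 / a * B q q) + 2 * s * B p q
      = (t * a)⁻¹ * (t * a * (t * a * B p p) + s * (t * a * B p q)
        + (t * a * (s * B p q) + s * (s * B q q))) := by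
    field_simp
    ring
  have := mul_nonneg (inv_nonneg.2 hta.le) (by linarith : 0 ≤ t * a * (t * a * B p p)
    + s * (t * a * B p q) + (t * a * (s * B p q) + s * (s * B q q)))
  linarith

lemma gradient_sq_mul_comp {η w : E2 → ℝ} {g : ℝ → ℝ} (hη : ContDiff ℝ 1 η)
    (hw : ContDiff ℝ 1 w) (hg : ContDiff ℝ 1 g) (x : E2) :
    ∇ (fun y => η y ^ 2 * g (w y)) x
      = (η x ^ 2 * deriv g (w x)) • ∇ w x + (2 * η x * g (w x)) • ∇ η x := by
  have hη' := (hη.differentiable one_ne_zero x).hasFDerivAt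
  have hw' := (hw.differentiable one_ne_zero x).hasFDerivAt
  have hg' := (hg.differentiable one_ne_zero (w x)).hasDerivAt
  have h := (hη'.pow 2).mul (hg'.comp_hasFDerivAt x hw')
  have h2 : fderiv ℝ (fun y => η y ^ 2 * g (w y)) x
      = (η x ^ 2 * deriv g (w x)) • fderiv ℝ w x + (2 * η x * g (w x)) • fderiv ℝ η x := by
    refine h.fderiv.trans ?_
    ext v
    simp
    ring
  simp [gradient, h2]

lemma continuous_gradient {w : E2 → ℝ} (hw : ContDiff ℝ 1 w) : Continuous (∇ w) :=
  (InnerProductSpace.toDual ℝ E2).symm.continuous.comp (hw.continuous_fderiv one_ne_zero)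

lemma hasCompactSupport_gradient {η : E2 → ℝ} (hη : HasCompactSupport η) :
    HasCompactSupport (∇ η) :=
  (hη.fderiv ℝ).mono fun x hx h => hx (by simp [gradient, h])

lemma hasCompactSupport_sq {η : E2 → ℝ} (hη : HasCompactSupport η) :
    HasCompactSupport fun x => η x ^ 2 :=
  hη.mono fun x hx h => hx (by simp [h])

/-- Energy estimate on a ball for weak solutions of `div (B ∇w) = 0`. -/
lemma integral_sq_mul_energy_le {B : E2 → E2 →L[ℝ] E2 →L[ℝ] ℝ} (hB : Continuous B)
    (hsymm : ∀ x p q, B x p q = B x q p) (hnonneg : ∀ x q, 0 ≤ B x q q)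
    {w : E2 → ℝ} (hw : ContDiff ℝ 1 w)
    (hweak : ∀ φ : E2 → ℝ, ContDiff ℝ 1 φ → HasCompactSupport φ →
      ∫ x, B x (∇ w x) (∇ φ x) = 0)
    {g : ℝ → ℝ} (hg : ContDiff ℝ 1 g) (hg' : ∀ s, 0 < deriv g s)
    {C : ℝ} (hC : ∀ x q, g (w x) ^ 2 * B x q q ≤ C * deriv g (w x) * ‖q‖ ^ 2)
    {η : E2 → ℝ} (hη : ContDiff ℝ 1 η) (hηc : HasCompactSupport η)
    {s : Set E2} (hs : IsOpen s) (hηs : ∀ x ∈ s, η x = 1) {t : ℝ} (ht : 0 < t) :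
    ∫ x, η x ^ 2 * (deriv g (w x) * B x (∇ w x) (∇ w x))
      ≤ t * (∫ x in sᶜ, η x ^ 2 * (deriv g (w x) * B x (∇ w x) (∇ w x)))
        + t⁻¹ * (C * ∫ x, ‖∇ η x‖ ^ 2) := by
  have hgw := continuous_gradient hw
  have hgη := continuous_gradient hη
  have hg'c : Continuous fun x => deriv g (w x) := (hg.continuous_deriv le_rfl).comp hw.continuous
  have hgc : Continuous fun x => g (w x) := hg.continuous.comp hw.continuous
  have hηc' := hasCompactSupport_gradient hηc
  have hQc : Continuous fun x => deriv g (w x) * B x (∇ w x) (∇ w x) :=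
    hg'c.mul ((hB.clm_apply hgw).clm_apply hgw)
  have hη2c := hasCompactSupport_sq hηc
  have hint : Integrable fun x => η x ^ 2 * (deriv g (w x) * B x (∇ w x) (∇ w x)) :=
    ((hη.continuous.pow 2).mul hQc).integrable_of_hasCompactSupport hη2c.mul_right
  have hDint : Integrable fun x => ‖∇ η x‖ ^ 2 :=
    (hgη.norm.pow 2).integrable_of_hasCompactSupport
      (hasCompactSupport_sq hηc'.norm)
  have hcross : Integrable fun x => 2 * (η x * g (w x)) * B x (∇ w x) (∇ η x) := by
    refine Continuous.integrable_of_hasCompactSupport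
      ((continuous_const.mul (hη.continuous.mul hgc)).mul
        ((hB.clm_apply hgw).clm_apply hgη)) ?_
    exact hηc.mono fun x hx h => hx (by simp [h])
  have htest := hweak (fun y => η y ^ 2 * g (w y))
    ((hη.pow 2).mul (hg.comp hw)) hη2c.mul_right
  have hexp : ∀ x, B x (∇ w x) (∇ (fun y => η y ^ 2 * g (w y)) x)
      = η x ^ 2 * (deriv g (w x) * B x (∇ w x) (∇ w x))
        + 2 * (η x * g (w x)) * B x (∇ w x) (∇ η x) := fun x => by
    rw [gradient_sq_mul_comp hη hw hg, map_add, map_smul, map_smul, smul_eq_mul, smul_eq_mul]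
    ring
  simp_rw [hexp] at htest
  rw [integral_add hint hcross] at htest
  have hpt : ∀ x, -(2 * (η x * g (w x)) * B x (∇ w x) (∇ η x))
      ≤ t * sᶜ.indicator (fun x => η x ^ 2 * (deriv g (w x) * B x (∇ w x) (∇ w x))) x
        + t⁻¹ * (C * ‖∇ η x‖ ^ 2) := fun x => by
    have hq : g (w x) ^ 2 / deriv g (w x) * B x (∇ η x) (∇ η x) ≤ C * ‖∇ η x‖ ^ 2 := by
      rw [div_mul_eq_mul_div, div_le_iff₀ (hg' _)]
      linarith [hC x (∇ η x)]
    by_cases hx : x ∈ s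
    · have h0 : ∇ η x = 0 := by
        have : η =ᶠ[𝓝 x] fun _ => (1 : ℝ) := by
          filter_upwards [hs.mem_nhds hx] with y hy using hηs y hy
        simp [gradient, this.fderiv_eq]
      simp [hx, h0]
    · rw [Set.indicator_of_mem (by simpa using hx)]
      have h := neg_two_mul_bilin_le (hsymm x) (hnonneg x) (s := g (w x)) (hg' (w x)) ht
        (η x • ∇ w x) (∇ η x)
      simp only [map_smul, smul_apply, smul_eq_mul] at h
      have := mul_le_mul_of_nonneg_left hq (inv_nonneg.2 ht.le)
      linarith
  have hI := hint.indicator hs.measurableSet.compl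
  have hmono := integral_mono hcross.neg
    ((hI.const_mul t).add ((hDint.const_mul C).const_mul t⁻¹)) hpt
  simp only [Pi.neg_apply, Pi.add_apply] at hmono
  rw [integral_neg, integral_add (hI.const_mul t) ((hDint.const_mul C).const_mul t⁻¹),
    integral_const_mul, integral_const_mul, integral_const_mul,
    integral_indicator hs.measurableSet.compl] at hmono
  linarith

/-- A Liouville principle in the plane: a weak solution of `div (B ∇w) = 0` whose
weighted energy density is controlled has vanishing energy. -/
lemma energy_eq_zero {B : E2 → E2 →L[ℝ] E2 →L[ℝ] ℝ} (hB : Continuous B)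
    (hsymm : ∀ x p q, B x p q = B x q p) (hnonneg : ∀ x q, 0 ≤ B x q q)
    {w : E2 → ℝ} (hw : ContDiff ℝ 1 w)
    (hweak : ∀ φ : E2 → ℝ, ContDiff ℝ 1 φ → HasCompactSupport φ →
      ∫ x, B x (∇ w x) (∇ φ x) = 0)
    {g : ℝ → ℝ} (hg : ContDiff ℝ 1 g) (hg' : ∀ s, 0 < deriv g s)
    {C : ℝ} (hC0 : 0 ≤ C) (hC : ∀ x q, g (w x) ^ 2 * B x q q ≤ C * deriv g (w x) * ‖q‖ ^ 2)
    (x : E2) : B x (∇ w x) (∇ w x) = 0 := by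
  obtain ⟨D, hD⟩ := exists_cutoff
  let Q : E2 → ℝ := fun x => deriv g (w x) * B x (∇ w x) (∇ w x)
  have hgw := continuous_gradient hw
  have hQc : Continuous Q :=
    ((hg.continuous_deriv le_rfl).comp hw.continuous).mul ((hB.clm_apply hgw).clm_apply hgw)
  have hQ0 : ∀ x, 0 ≤ Q x := fun x => mul_nonneg (hg' _).le (hnonneg x _)
  have hQi : ∀ R, IntegrableOn Q (ball 0 R) := fun R =>
    (hQc.continuousOn.integrableOn_compact (isCompact_closedBall 0 R)).mono_set
      ball_subset_closedBall
  let E : ℝ → ℝ := fun R => ∫ x in ball 0 R, Q x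
  have hE0 : ∀ R, 0 ≤ E R := fun R => integral_nonneg hQ0
  have hEmono : Monotone E := fun R S hRS =>
    setIntegral_mono_set (hQi S) (ae_of_all _ hQ0) (ball_subset_ball hRS).eventuallyLE
  have hball : ∀ R, 0 < R → ∀ t, 0 < t → E R ≤ t * (E (2 * R) - E R) + t⁻¹ * (C * D)
      ∧ E R ≤ 4 * (C * D) := by
    intro R hR t ht
    obtain ⟨η, hη, hηc, hη0, hη1, hηin, hηout, hηD⟩ := hD R hR
    have hest := fun {t : ℝ} (ht : 0 < t) => integral_sq_mul_energy_le hB hsymm hnonneg hw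
      hweak hg hg' hC hη hηc isOpen_ball hηin ht
    have hint : Integrable fun x => η x ^ 2 * Q x :=
      ((hη.continuous.pow 2).mul hQc).integrable_of_hasCompactSupport
        (hasCompactSupport_sq hηc).mul_right
    have hpos : ∀ x, 0 ≤ η x ^ 2 * Q x := fun x => mul_nonneg (sq_nonneg _) (hQ0 x)
    have hsplit := integral_add_compl (μ := volume) (measurableSet_ball (x := (0 : E2)) (ε := R))
      hint
    have hin : ∫ x in ball 0 R, η x ^ 2 * Q x = E R :=
      setIntegral_congr_fun measurableSet_ball fun x hx => by simp [hηin x hx]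
    have htot : ∫ x, η x ^ 2 * Q x ≤ E (2 * R) := by
      change _ ≤ ∫ x in ball 0 (2 * R), Q x
      rw [← integral_indicator measurableSet_ball]
      refine integral_mono hint ((integrable_indicator_iff measurableSet_ball).2 (hQi _))
        fun x => ?_
      by_cases hx : x ∈ ball (0 : E2) (2 * R)
      · simp only [Set.indicator_of_mem hx]
        exact mul_le_of_le_one_left (hQ0 x) (pow_le_one₀ (hη0 x) (hη1 x))
      · simp [hx, hηout x hx]
    have hcompl0 : 0 ≤ ∫ x in (ball 0 R)ᶜ, η x ^ 2 * Q x := integral_nonneg hpos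
    have hDC : C * ∫ x, ‖∇ η x‖ ^ 2 ≤ C * D := mul_le_mul_of_nonneg_left hηD hC0
    rw [hin] at hsplit
    constructor
    · have h1 : t * ∫ x in (ball 0 R)ᶜ, η x ^ 2 * Q x ≤ t * (E (2 * R) - E R) :=
        mul_le_mul_of_nonneg_left (by linarith) ht.le
      have h2 := mul_le_mul_of_nonneg_left hDC (inv_nonneg.2 ht.le)
      have h3 : ∫ x, η x ^ 2 * Q x ≤ t * (∫ x in (ball 0 R)ᶜ, η x ^ 2 * Q x)
        + t⁻¹ * (C * ∫ x, ‖∇ η x‖ ^ 2) := hest ht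
      linarith
    · have h3 : ∫ x, η x ^ 2 * Q x ≤ 2⁻¹ * (∫ x in (ball 0 R)ᶜ, η x ^ 2 * Q x)
        + 2⁻¹⁻¹ * (C * ∫ x, ‖∇ η x‖ ^ 2) := hest (inv_pos.2 two_pos)
      have := hE0 R
      norm_num at h3
      linarith
  have hEzero : ∀ R, E R ≤ 0 := by
    have hbdd : BddAbove (Set.range E) := by
      refine ⟨4 * (C * D), ?_⟩
      rintro _ ⟨R, rfl⟩
      exact (hEmono (le_max_left R 1)).trans (hball _ (by positivity) 1 one_pos).2
    have hlim := tendsto_atTop_ciSup hEmono hbdd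
    have hlim2 : Tendsto (fun R => E (2 * R)) atTop (𝓝 (⨆ R, E R)) :=
      hlim.comp (tendsto_id.const_mul_atTop two_pos)
    have hsup : ∀ t : ℝ, 0 < t → (⨆ R, E R) ≤ t⁻¹ * (C * D) := fun t ht => by
      have hrhs := ((hlim2.sub hlim).const_mul t).add_const (t⁻¹ * (C * D))
      rw [sub_self, mul_zero, zero_add] at hrhs
      refine le_of_tendsto_of_tendsto hlim hrhs ?_
      filter_upwards [eventually_gt_atTop 0] with R hR using (hball R hR t ht).1
    have hsup0 : (⨆ R, E R) ≤ 0 := by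
      have h0 := (tendsto_inv_atTop_zero (𝕜 := ℝ)).mul_const (C * D)
      rw [zero_mul] at h0
      refine ge_of_tendsto h0 ?_
      filter_upwards [eventually_gt_atTop 0] with t ht using hsup t ht
    exact fun R => (le_ciSup hbdd R).trans hsup0
  have hae : Q =ᵐ[volume.restrict (ball 0 (‖x‖ + 1))] 0 :=
    (integral_eq_zero_iff_of_nonneg hQ0 (hQi _)).1 (le_antisymm (hEzero _) (hE0 _))
  have hQx : Q x = 0 := Measure.eqOn_open_of_ae_eq hae isOpen_ball hQc.continuousOn
    continuousOn_const (by simp)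
  exact (mul_eq_zero.1 hQx).resolve_left (hg' _).ne'

end Energy

section Growth

lemma hasDerivAt_mul_one_add_sq_rpow (b s : ℝ) :
    HasDerivAt (fun s : ℝ => s * (1 + s ^ 2) ^ b)
      ((1 + s ^ 2) ^ (b - 1) * (1 + (2 * b + 1) * s ^ 2)) s := by
  have hpos : 0 < 1 + s ^ 2 := by positivity
  have h1 : HasDerivAt (fun s : ℝ => 1 + s ^ 2) (2 * s) s := by
    simpa using (hasDerivAt_pow 2 s).const_add 1
  refine ((hasDerivAt_id s).mul (h1.rpow_const (p := b) (Or.inl hpos.ne'))).congr_deriv ?_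
  have : (1 + s ^ 2) ^ b = (1 + s ^ 2) ^ (b - 1) * (1 + s ^ 2) := by
    rw [← rpow_add_one hpos.ne', sub_add_cancel]
  rw [this, id]
  ring

lemma contDiff_mul_one_add_sq_rpow (b : ℝ) :
    ContDiff ℝ 1 fun s : ℝ => s * (1 + s ^ 2) ^ b :=
  contDiff_id.mul ((contDiff_const.add (contDiff_id.pow 2)).rpow_const_of_ne
    fun s => by simp only [id]; positivity)

lemma deriv_mul_one_add_sq_rpow_pos {ε : ℝ} (hε : 0 < ε) (s : ℝ) :
    0 < deriv (fun s : ℝ => s * (1 + s ^ 2) ^ ((ε - 1) / 2)) s := by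
  rw [(hasDerivAt_mul_one_add_sq_rpow _ s).deriv]
  have : 2 * ((ε - 1) / 2) + 1 = ε := by ring
  rw [this]
  positivity

lemma sq_mul_one_add_sq_rpow_le {ε : ℝ} (hε : 0 < ε) (s : ℝ) :
    (s * (1 + s ^ 2) ^ ((ε - 1) / 2)) ^ 2 ≤ ε⁻¹ * (1 + s ^ 2) ^ ((1 + ε) / 2)
      * deriv (fun s : ℝ => s * (1 + s ^ 2) ^ ((ε - 1) / 2)) s := by
  have hpos : 0 < 1 + s ^ 2 := by positivity
  rw [(hasDerivAt_mul_one_add_sq_rpow _ s).deriv]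
  have h1 : 2 * ((ε - 1) / 2) + 1 = ε := by ring
  have h2 : (1 + s ^ 2) ^ ((1 + ε) / 2) = (1 + s ^ 2) ^ ((ε - 1) / 2) * (1 + s ^ 2) := by
    rw [← rpow_add_one hpos.ne']
    congr 1
    ring
  have h3 : (1 + s ^ 2) ^ ((ε - 1) / 2) = (1 + s ^ 2) ^ ((ε - 1) / 2 - 1) * (1 + s ^ 2) := by
    rw [← rpow_add_one hpos.ne', sub_add_cancel]
  rw [h1, h2, h3]
  set r := (1 + s ^ 2) ^ ((ε - 1) / 2 - 1)
  have hfac : 0 ≤ ε⁻¹ * (r * (1 + s ^ 2)) ^ 2 := by positivity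
  have hle : ε * s ^ 2 ≤ 1 + ε * s ^ 2 := by linarith
  calc (s * (r * (1 + s ^ 2))) ^ 2 = ε⁻¹ * (r * (1 + s ^ 2)) ^ 2 * (ε * s ^ 2) := by
        field_simp
    _ ≤ ε⁻¹ * (r * (1 + s ^ 2)) ^ 2 * (1 + ε * s ^ 2) := mul_le_mul_of_nonneg_left hle hfac
    _ = _ := by ring

lemma exists_rpow_mul_log_div_le {m K ε : ℝ} (hm0 : 0 ≤ m) (hK : 0 < K) (hε : 0 < ε)
    (hmε : m * (1 + ε) < 1) :
    ∃ C : ℝ, 0 ≤ C ∧ ∀ P s : ℝ, 0 ≤ P → |s| ≤ K * (P ^ m + 1) →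
      (1 + s ^ 2) ^ ((1 + ε) / 2) * (Real.log (2 + P) / (1 + P)) ≤ C := by
  set δ := 1 - m * (1 + ε) with hδ
  have hδ0 : 0 < δ := by linarith
  refine ⟨(1 + 2 * K) ^ (1 + ε) * (2 ^ δ / δ), by positivity, fun P s hP hs => ?_⟩
  have hA : 0 < 1 + P := by linarith
  have hA1 : 1 ≤ (1 + P) ^ m := one_le_rpow (by linarith) hm0
  have hAP : P ^ m ≤ (1 + P) ^ m := rpow_le_rpow hP (by linarith) hm0
  have hsK : 1 + |s| ≤ (1 + 2 * K) * (1 + P) ^ m := by nlinarith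
  have hsq : 1 + s ^ 2 ≤ (1 + |s|) ^ 2 := by nlinarith [abs_nonneg s, sq_abs s]
  have hweight : (1 + s ^ 2) ^ ((1 + ε) / 2)
      ≤ (1 + 2 * K) ^ (1 + ε) * (1 + P) ^ (m * (1 + ε)) := by
    calc (1 + s ^ 2) ^ ((1 + ε) / 2) ≤ ((1 + |s|) ^ 2) ^ ((1 + ε) / 2) :=
          rpow_le_rpow (by positivity) hsq (by positivity)
      _ = (1 + |s|) ^ (1 + ε) := by
          rw [← rpow_natCast, ← rpow_mul (by positivity)]
          congr 1
          push_cast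
          ring
      _ ≤ ((1 + 2 * K) * (1 + P) ^ m) ^ (1 + ε) :=
          rpow_le_rpow (by positivity) hsK (by positivity)
      _ = _ := by rw [mul_rpow (by positivity) (by positivity), ← rpow_mul hA.le]
  have hlog : Real.log (2 + P) ≤ 2 ^ δ / δ * (1 + P) ^ δ := by
    calc Real.log (2 + P) ≤ Real.log (2 * (1 + P)) :=
          log_le_log (by linarith) (by linarith)
      _ ≤ (2 * (1 + P)) ^ δ / δ := log_le_rpow_div (by positivity) hδ0
      _ = _ := by rw [mul_rpow two_pos.le hA.le]; ring
  have hlog0 : 0 ≤ Real.log (2 + P) := log_nonneg (by linarith)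
  have hsplit : (1 + P) ^ (m * (1 + ε)) * (1 + P) ^ δ = 1 + P := by
    rw [← rpow_add hA, hδ, add_sub_cancel, rpow_one]
  rw [← mul_div_assoc, div_le_iff₀ hA]
  calc (1 + s ^ 2) ^ ((1 + ε) / 2) * Real.log (2 + P)
      ≤ ((1 + 2 * K) ^ (1 + ε) * (1 + P) ^ (m * (1 + ε))) * (2 ^ δ / δ * (1 + P) ^ δ) :=
        mul_le_mul hweight hlog hlog0 (by positivity)
    _ = (1 + 2 * K) ^ (1 + ε) * (2 ^ δ / δ)
        * ((1 + P) ^ (m * (1 + ε)) * (1 + P) ^ δ) := by ring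
    _ = _ := by rw [hsplit]

end Growth

section Reduction

lemma Hess_eq_fderiv (f : E2 → ℝ) (p q : E2) : Hess f p q = fderiv ℝ (fderiv ℝ f) p q q := by
  simp [Hess, iteratedFDeriv_two_apply]

lemma contDiff_gradient {u : E2 → ℝ} (hu : ContDiff ℝ 2 u) : ContDiff ℝ 1 (∇ u) :=
  (InnerProductSpace.toDual ℝ E2).symm.contDiff.comp
    (hu.fderiv_right (m := 1) (by norm_num))

lemma contDiff_pd {u : E2 → ℝ} (hu : ContDiff ℝ 2 u) (i : Fin 2) : ContDiff ℝ 1 (pd u i) :=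
  (hu.fderiv_right (m := 1) (by norm_num)).clm_apply contDiff_const

lemma fderiv_fderiv_symm {f : E2 → ℝ} (hf : ContDiff ℝ 2 f) (x p q : E2) :
    fderiv ℝ (fderiv ℝ f) x p q = fderiv ℝ (fderiv ℝ f) x q p :=
  (hf.contDiffAt.isSymmSndFDerivAt (by simp)).eq p q

lemma fderiv_gradient_ee {u : E2 → ℝ} (hu : ContDiff ℝ 2 u) (i : Fin 2) (x : E2) :
    fderiv ℝ (∇ u) x (ee i) = ∇ (pd u i) x := by
  have hd : DifferentiableAt ℝ (fderiv ℝ u) x :=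
    (hu.fderiv_right (m := 1) (by norm_num)).differentiable one_ne_zero x
  have h1 : fderiv ℝ (∇ u) x (ee i)
      = (InnerProductSpace.toDual ℝ E2).symm (fderiv ℝ (fderiv ℝ u) x (ee i)) := by
    have := ((InnerProductSpace.toDual ℝ E2).symm.toContinuousLinearEquiv.hasFDerivAt
      (x := fderiv ℝ u x)).comp x hd.hasFDerivAt
    exact congrArg (fun L : E2 →L[ℝ] E2 => L (ee i)) this.fderiv
  have h2 : fderiv ℝ (pd u i) x = fderiv ℝ (fderiv ℝ u) x (ee i) := by
    ext q
    rw [fderiv_fderiv_symm hu]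
    have := hd.hasFDerivAt.clm_apply (hasFDerivAt_const (ee i) x)
    exact (congrArg (fun L : E2 →L[ℝ] ℝ => L q) this.fderiv).trans (by simp)
  rw [h1, gradient, h2]

lemma sum_fderiv_ee_smul (φ : E2 → ℝ) (x : E2) :
    ∑ i, fderiv ℝ φ x (ee i) • ee i = ∇ φ x := by
  have h : ∀ i, fderiv ℝ φ x (ee i) = (∇ φ x) i := fun i => by
    rw [← InnerProductSpace.toDual_symm_apply (𝕜 := ℝ), ee, EuclideanSpace.inner_single_right]
    simp [gradient]
  simp_rw [h]
  ext j
  fin_cases j <;> simp [ee]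

/-- The weak form of the equation obtained by differentiating `div [Df(∇u)] = 0`. -/
lemma integral_hessian_gradient_pd_eq_zero {f u : E2 → ℝ} (hf : ContDiff ℝ 2 f)
    (hu : ContDiff ℝ 2 u) (heq : solves f u) (k : Fin 2) {φ : E2 → ℝ}
    (hφ : ContDiff ℝ 1 φ) (hc : HasCompactSupport φ) :
    ∫ x, fderiv ℝ (fderiv ℝ f) (∇ u x) (∇ (pd u k) x) (∇ φ x) = 0 := by
  have hDf : ContDiff ℝ 1 (fderiv ℝ f) := hf.fderiv_right (by norm_num)
  have hgu := contDiff_gradient hu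
  have h := integral_sum_fderiv_mul_fderiv_eq_zero
    (V := fun i y => fderiv ℝ f (∇ u y) (ee i))
    (fun i => (hDf.comp hgu).clm_apply contDiff_const) heq (ee k) hφ hc
  rw [← h]
  refine integral_congr_ae (ae_of_all _ fun x => ?_)
  have hd : ∀ i, fderiv ℝ (fun y => fderiv ℝ f (∇ u y) (ee i)) x (ee k)
      = fderiv ℝ (fderiv ℝ f) (∇ u x) (∇ (pd u k) x) (ee i) := fun i => by
    have h1 := ((hDf.differentiable one_ne_zero (∇ u x)).hasFDerivAt.comp x
      (hgu.differentiable one_ne_zero x).hasFDerivAt).clm_apply (hasFDerivAt_const (ee i) x)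
    rw [← fderiv_gradient_ee hu]
    exact (congrArg (fun L : E2 →L[ℝ] ℝ => L (ee k)) h1.fderiv).trans (by simp)
  simp only [hd]
  rw [← sum_fderiv_ee_smul φ x, map_sum]
  exact Finset.sum_congr rfl fun i _ => by rw [map_smul, smul_eq_mul, mul_comm]

lemma abs_pd_le_norm_gradient (u : E2 → ℝ) (i : Fin 2) (x : E2) : |pd u i x| ≤ ‖∇ u x‖ := by
  have h := (fderiv ℝ u x).le_opNorm (ee i)
  have h1 : ‖ee i‖ = 1 := by simp [ee]
  rw [h1, mul_one] at h
  simpa [gradient, pd] using h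

end Reduction

theorem statement5 (f u : E2 → ℝ)
    (hf : ContDiff ℝ 2 f)
    (hpos : ∀ p q : E2, q ≠ 0 → 0 < Hess f p q)
    (lam : ℝ) (hlam : 0 < lam)
    (hgrow : ∀ p q : E2, Hess f p q ≤ lam * (Real.log (2 + ‖p‖) / (1 + ‖p‖)) * ‖q‖ ^ 2)
    (hu : ContDiff ℝ 2 u) (heq : solves f u)
    (m K : ℝ) (hm0 : 0 ≤ m) (hm1 : m < 1) (hK : 0 < K)
    (hbd : ∀ x : E2, |pd u 0 x| ≤ K * (|pd u 1 x| ^ m + 1)) :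
    ∃ a : ℝ, ∀ x : E2, pd u 0 x = a := by
  have hε : 0 < (1 - m) / 2 := by linarith
  have hmε : m * (1 + (1 - m) / 2) < 1 := by nlinarith
  set ε := (1 - m) / 2
  obtain ⟨C, hC0, hC⟩ := exists_rpow_mul_log_div_le hm0 hK hε hmε
  have hw := contDiff_pd hu 0
  have hnonneg : ∀ p q, 0 ≤ fderiv ℝ (fderiv ℝ f) p q q := fun p q => by
    rcases eq_or_ne q 0 with rfl | hq
    · simp
    · exact (Hess_eq_fderiv f p q ▸ hpos p q hq).le
  have hDf : ContDiff ℝ 1 (fderiv ℝ f) := hf.fderiv_right (by norm_num)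
  have henergy : ∀ x, fderiv ℝ (fderiv ℝ f) (∇ u x) (∇ (pd u 0) x) (∇ (pd u 0) x) = 0 := by
    refine energy_eq_zero (B := fun x => fderiv ℝ (fderiv ℝ f) (∇ u x))
      ((hDf.continuous_fderiv one_ne_zero).comp (contDiff_gradient hu).continuous)
      (fun x => fderiv_fderiv_symm hf _) (fun x => hnonneg _) hw
      (fun φ hφ hc => integral_hessian_gradient_pd_eq_zero hf hu heq 0 hφ hc)
      (contDiff_mul_one_add_sq_rpow ((ε - 1) / 2)) (deriv_mul_one_add_sq_rpow_pos hε)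
      (C := ε⁻¹ * (lam * C)) (by positivity) fun x q => ?_
    have hg := sq_mul_one_add_sq_rpow_le hε (pd u 0 x)
    have hg' := deriv_mul_one_add_sq_rpow_pos hε (pd u 0 x)
    set d := deriv (fun s : ℝ => s * (1 + s ^ 2) ^ ((ε - 1) / 2)) (pd u 0 x)
    have hP := hC ‖∇ u x‖ (pd u 0 x) (norm_nonneg _) ((hbd x).trans (by
      gcongr
      exact abs_pd_le_norm_gradient u 1 x))
    have hH := hgrow (∇ u x) q
    rw [Hess_eq_fderiv] at hH
    set W := (1 + pd u 0 x ^ 2) ^ ((1 + ε) / 2)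
    have hW : 0 ≤ W := by positivity
    calc _ ≤ (ε⁻¹ * W * d) * (lam * (Real.log (2 + ‖∇ u x‖) / (1 + ‖∇ u x‖)) * ‖q‖ ^ 2) :=
          mul_le_mul hg hH (hnonneg _ _) (by positivity)
      _ = ε⁻¹ * lam * d * ‖q‖ ^ 2
          * (W * (Real.log (2 + ‖∇ u x‖) / (1 + ‖∇ u x‖))) := by ring
      _ ≤ ε⁻¹ * lam * d * ‖q‖ ^ 2 * C := mul_le_mul_of_nonneg_left hP (by positivity)
      _ = _ := by ring
  refine ⟨pd u 0 0, fun x => is_const_of_fderiv_eq_zero (𝕜 := ℝ)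
    (hw.differentiable one_ne_zero) (fun y => ?_) x 0⟩
  have hgrad : ∇ (pd u 0) y = 0 := by
    by_contra hne
    have := hpos (∇ u y) _ hne
    rw [Hess_eq_fderiv, henergy y] at this
    exact this.false
  simpa [gradient] using hgrad
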